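/- In the first Weyl algebra A₁ = C⟨x,y⟩/(yx − xy − 1), the element f = y²x satisfies f = (1 + yx)·y, and x, y, and 1 + yx are atoms, so f admits factorizations into atoms of lengths 2 and 3; in particular A₁ is not half-factorial. -/

import Mathlib

/-- The defining relation `y·x ~ x·y + 1` of the first Weyl algebra, inside the free
algebra on two generators `x` (index `0`) and `y` (index `1`) over `ℂ`. -/
inductive weylRel : FreeAlgebra ℂ (Fin 2) → FreeAlgebra ℂ (Fin 2) → Prop
  | rel : weylRel (FreeAlgebra.ι ℂ 1 * FreeAlgebra.ι ℂ 0)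
      (FreeAlgebra.ι ℂ 0 * FreeAlgebra.ι ℂ 1 + 1)

/-- The first Weyl algebra `A₁ = ℂ⟨x, y⟩/(yx − xy − 1)`. -/
abbrev WeylA : Type := RingQuot weylRel

/-- The generator `x` of `A₁`. -/
noncomputable def wX : WeylA := RingQuot.mkAlgHom ℂ weylRel (FreeAlgebra.ι ℂ 0)

/-- The generator `y` of `A₁`. -/
noncomputable def wY : WeylA := RingQuot.mkAlgHom ℂ weylRel (FreeAlgebra.ι ℂ 1)

/-!
An Ore extension `R[y; δ]` is a ring whose elements are uniquely `∑ rₙ yⁿ`, with `y r = r y + δ r`.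
The degree in `y` is additive when `R` is a domain, so a factorization of an element of degree `0`
takes place in `R`, and a factorization of `u y + v` has a factor `h` in `R`. If `h` is the left
factor, it divides `u` and `v`; if it is the right factor, comparing with
`u y + v = y u + (v - δ u)` shows that it divides `u` and `v - δ u`. So `u y + v` is an atom as soon
as `u` is coprime to `v` and to `v - δ u`. The Weyl algebra is `ℂ[x][y; d/dx]`, and both `y` and
`1 + yx = xy + 2` pass this test.
-/

open Polynomial

section OreMultiplication

variable {k R : Type*} [CommRing k] [CommRing R] [Algebra k R] (δ : Derivation k R R)

/-- The derivation of `R[X]` that applies `δ` to each coefficient; it is `Derivation.mapCoeffs` with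
`PolynomialModule R R` identified with `R[X]`. -/
noncomputable def coeffDerivation : Derivation k R[X] R[X] :=
  PolynomialModule.equivPolynomialSelf.compDer δ.mapCoeffs

theorem coeff_coeffDerivation (p : R[X]) (n : ℕ) :
    (coeffDerivation δ p).coeff n = δ (p.coeff n) :=
  rfl

theorem coeffDerivation_C (r : R) : coeffDerivation δ (C r) = C (δ r) := by
  ext n
  rw [coeff_coeffDerivation, coeff_C, coeff_C, apply_ite δ, map_zero]

theorem coeffDerivation_X_pow (n : ℕ) : coeffDerivation δ (X ^ n) = 0 := by
  ext m
  rw [coeff_coeffDerivation, coeff_X_pow, apply_ite δ, map_zero, δ.map_one_eq_zero, ite_self,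
    coeff_zero]

theorem degree_coeffDerivation_le (p : R[X]) : (coeffDerivation δ p).degree ≤ p.degree := by
  refine degree_mono fun n hn => ?_
  rw [mem_support_iff, coeff_coeffDerivation] at hn
  exact mem_support_iff.mpr fun hp => hn (by rw [hp, map_zero])

/-- Left multiplication by `y` in the Ore extension `R[y; δ]`, where the polynomial `∑ rₙ Xⁿ` stands
for the normally ordered element `∑ rₙ yⁿ`. -/
noncomputable def oreVar : Module.End k R[X] :=
  LinearMap.mulLeft k X + (coeffDerivation δ).toLinearMap

theorem oreVar_apply (p : R[X]) : oreVar δ p = X * p + coeffDerivation δ p :=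
  rfl

theorem oreVar_C_mul (r : R) (p : R[X]) : oreVar δ (C r * p) = C r * oreVar δ p + C (δ r) * p := by
  rw [oreVar_apply, oreVar_apply, Derivation.leibniz, coeffDerivation_C, smul_eq_mul, smul_eq_mul]
  ring

theorem oreVar_pow_one (n : ℕ) : (oreVar δ ^ n) 1 = X ^ n := by
  induction n with
  | zero => rfl
  | succ n ih =>
    rw [pow_succ', Module.End.mul_apply, ih, oreVar_apply, coeffDerivation_X_pow, add_zero,
      ← pow_succ']

theorem degree_oreVar (p : R[X]) : (oreVar δ p).degree = p.degree + 1 := by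
  nontriviality R
  rcases eq_or_ne p 0 with rfl | hp
  · simp
  have hlt : (coeffDerivation δ p).degree < (X * p).degree := by
    rw [mul_comm]
    exact (degree_coeffDerivation_le δ p).trans_lt (degree_lt_degree_mul_X hp)
  rw [oreVar_apply, degree_add_eq_left_of_degree_lt hlt, mul_comm, degree_mul_X]

theorem degree_oreVar_pow (n : ℕ) (p : R[X]) : ((oreVar δ ^ n) p).degree = n + p.degree := by
  induction n with
  | zero => simp
  | succ n ih =>
    rw [pow_succ', Module.End.mul_apply, degree_oreVar, ih, Nat.cast_succ, add_right_comm]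

/-- The product of the Ore extension `R[y; δ]`, transported to normally ordered polynomials:
`oreMul δ p` is left multiplication by `p`. -/
noncomputable def oreMul (p : R[X]) : Module.End k R[X] :=
  p.eval₂ ((Algebra.lmul k R[X] : R[X] →+* Module.End k R[X]).comp C) (oreVar δ)

theorem oreMul_apply (p q : R[X]) : oreMul δ p q = p.sum fun n r => C r * (oreVar δ ^ n) q := by
  simp [oreMul, eval₂_eq_sum, Polynomial.sum]

theorem oreMul_one (p : R[X]) : oreMul δ p 1 = p := by
  simp only [oreMul_apply, oreVar_pow_one, sum_C_mul_X_pow_eq]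

theorem oreMul_C (r : R) (q : R[X]) : oreMul δ (C r) q = C r * q := by
  simp [oreMul]

theorem oreMul_linear_C (f g h : R) :
    oreMul δ (C f * X + C g) (C h) = C (f * h) * X + C (f * δ h + g * h) := by
  have hlin : oreMul δ (C f * X + C g) (C h) = C f * oreVar δ (C h) + C g * C h := by
    simp [oreMul, eval₂_mul_X]
  rw [hlin, oreVar_apply, coeffDerivation_C]
  simp only [C_add, C_mul]
  ring

theorem dvd_of_oreMul_C_eq_linear {d u v : R} {q : R[X]}
    (h : oreMul δ (C d) q = C u * X + C v) : d ∣ u ∧ d ∣ v := by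
  rw [oreMul_C] at h
  exact ⟨⟨q.coeff 1, by simpa [coeff_C] using congrArg (coeff · 1) h.symm⟩,
    ⟨q.coeff 0, by simpa using congrArg (coeff · 0) h.symm⟩⟩

theorem dvd_of_oreMul_apply_C_eq_linear {d u v : R} {p : R[X]} (hp : p.natDegree ≤ 1)
    (h : oreMul δ p (C d) = C u * X + C v) : d ∣ u ∧ d ∣ v - δ u := by
  obtain ⟨f, g, rfl⟩ := exists_eq_X_add_C_of_natDegree_le_one hp
  rw [oreMul_linear_C] at h
  have hu : f * d = u := by simpa [coeff_C] using congrArg (coeff · 1) h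
  have hv : f * δ d + g * d = v := by simpa using congrArg (coeff · 0) h
  refine ⟨⟨f, by rw [← hu, mul_comm]⟩, ⟨g - δ f, ?_⟩⟩
  rw [← hu, ← hv, Derivation.leibniz, smul_eq_mul, smul_eq_mul]
  ring

theorem degree_oreMul [NoZeroDivisors R] (p q : R[X]) :
    (oreMul δ p q).degree = p.degree + q.degree := by
  rcases eq_or_ne q 0 with rfl | hq
  · simp
  have hterm : ∀ n ∈ p.support, (C (p.coeff n) * (oreVar δ ^ n) q).degree = n + q.degree :=
    fun n hn => by
      rw [degree_mul, degree_C (mem_support_iff.mp hn), zero_add, degree_oreVar_pow]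
  have hcancel : ∀ m n : ℕ, (m + q.degree : WithBot ℕ) = n + q.degree → m = n := fun m n h => by
    rw [degree_eq_natDegree hq] at h
    exact Nat.add_right_cancel (by exact_mod_cast h)
  rw [oreMul_apply, Polynomial.sum, degree_sum_eq_of_disjoint _ _ fun m hm n hn hmn => ?_,
    Finset.sup_congr rfl hterm]
  · exact (Finset.apply_sup_eq_sup_comp_of_linearOrder (· + q.degree)
      (fun _ _ h => add_le_add_left h _) (WithBot.bot_add _)).symm
  · simpa only [Function.onFun, Function.comp_apply, hterm m hm.1, hterm n hn.1] using
      mt (hcancel m n) hmn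

end OreMultiplication

/-- `A` is the Ore extension `R[y; δ]`: the variable `y` satisfies `y r = r y + δ r` for `r` in `R`,
embedded by `φ`, and each element of `A` is uniquely of the form `∑ φ(rₙ) yⁿ`. -/
structure IsOreExtension {k R A : Type*} [CommRing k] [CommRing R] [Algebra k R] [Ring A]
    (δ : Derivation k R R) (φ : R →+* A) (y : A) : Prop where
  var_mul : ∀ r, y * φ r = φ r * y + φ (δ r)
  bijective_eval₂ : Function.Bijective (eval₂ φ y)

section NormalOrdering

variable {k R A : Type*} [CommRing k] [CommRing R] [Algebra k R] [Ring A]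
  {δ : Derivation k R R} {φ : R →+* A} {y : A}

theorem eval₂_oreVar (hy : ∀ r, y * φ r = φ r * y + φ (δ r)) (p : R[X]) :
    eval₂ φ y (oreVar δ p) = y * eval₂ φ y p := by
  induction p using Polynomial.induction_on' with
  | add p q hp hq => simp only [map_add, mul_add, eval₂_add, hp, hq]
  | monomial n r =>
    rw [← C_mul_X_pow_eq_monomial, oreVar_C_mul, oreVar_apply, coeffDerivation_X_pow, add_zero,
      ← pow_succ', eval₂_add]
    simp only [← smul_eq_C_mul, eval₂_smul, eval₂_X_pow]
    rw [← mul_assoc, hy, add_mul, mul_assoc, ← pow_succ']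

theorem eval₂_oreVar_pow (hy : ∀ r, y * φ r = φ r * y + φ (δ r)) (n : ℕ) (p : R[X]) :
    eval₂ φ y ((oreVar δ ^ n) p) = y ^ n * eval₂ φ y p := by
  induction n with
  | zero => simp
  | succ n ih =>
    rw [pow_succ', Module.End.mul_apply, eval₂_oreVar hy, ih, pow_succ', mul_assoc]

theorem eval₂_oreMul (hy : ∀ r, y * φ r = φ r * y + φ (δ r)) (p q : R[X]) :
    eval₂ φ y (oreMul δ p q) = eval₂ φ y p * eval₂ φ y q := by
  rw [oreMul_apply, Polynomial.sum, eval₂_finsetSum, eval₂_eq_sum, Polynomial.sum, Finset.sum_mul]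
  simp only [← smul_eq_C_mul, eval₂_smul, eval₂_oreVar_pow hy, mul_assoc]

theorem injective_eval₂_of_ringHom (ρ : A →+* Module.End k R[X])
    (hφ : ρ.comp φ = (Algebra.lmul k R[X] : R[X] →+* Module.End k R[X]).comp C)
    (hy : ρ y = oreVar δ) : Function.Injective (eval₂ φ y) := by
  refine Function.LeftInverse.injective (g := fun a => ρ a 1) fun p => ?_
  change ρ (eval₂ φ y p) 1 = p
  rw [hom_eval₂, hφ, hy]
  exact oreMul_one δ p

end NormalOrdering

namespace IsOreExtension

variable {k R A : Type*} [CommRing k] [CommRing R] [Algebra k R] [Ring A]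
  {δ : Derivation k R R} {φ : R →+* A} {y : A}

theorem var_mul_map_of_apply_eq_one (h : IsOreExtension δ φ y) {x : R} (hδx : δ x = 1) :
    y * φ x = φ x * y + 1 := by
  rw [h.var_mul, hδx, map_one]

theorem exists_oreMul_eq_of_eval₂_eq_mul [NoZeroDivisors R] (h : IsOreExtension δ φ y) {p : R[X]}
    {a b : A} (hab : eval₂ φ y p = a * b) :
    ∃ q r, eval₂ φ y q = a ∧ eval₂ φ y r = b ∧ oreMul δ q r = p ∧
      q.degree + r.degree = p.degree := by
  obtain ⟨q, rfl⟩ := h.bijective_eval₂.surjective a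
  obtain ⟨r, rfl⟩ := h.bijective_eval₂.surjective b
  have hqr : oreMul δ q r = p := by
    rw [← eval₂_oreMul h.var_mul] at hab
    exact (h.bijective_eval₂.injective hab).symm
  exact ⟨q, r, rfl, rfl, hqr, by rw [← degree_oreMul δ, hqr]⟩

variable [IsDomain R]

theorem exists_isUnit_of_isUnit_eval₂ (h : IsOreExtension δ φ y) {p : R[X]}
    (hp : IsUnit (eval₂ φ y p)) : ∃ r, IsUnit r ∧ p = C r := by
  obtain ⟨b, hb⟩ := hp.exists_right_inv
  obtain ⟨q, s, hq, -, hqs, hdeg⟩ :=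
    h.exists_oreMul_eq_of_eval₂_eq_mul ((eval₂_one φ y).trans hb.symm)
  obtain rfl := h.bijective_eval₂.injective hq
  rw [degree_one, Nat.WithBot.add_eq_zero_iff] at hdeg
  have hC := eq_C_of_degree_eq_zero hdeg.1
  rw [hC, oreMul_C] at hqs
  exact ⟨_, isUnit_C.mp (.of_mul_eq_one _ hqs), hC⟩

theorem irreducible_map (h : IsOreExtension δ φ y) {r : R} (hr : Irreducible r) :
    Irreducible (φ r) := by
  rw [← eval₂_C φ y]
  refine ⟨fun hu => ?_, fun a b hab => ?_⟩
  · obtain ⟨s, hs, hrs⟩ := h.exists_isUnit_of_isUnit_eval₂ hu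
    exact hr.not_isUnit (C_injective hrs ▸ hs)
  · obtain ⟨p, q, rfl, rfl, hpq, hdeg⟩ := h.exists_oreMul_eq_of_eval₂_eq_mul hab
    rw [degree_C hr.ne_zero, Nat.WithBot.add_eq_zero_iff] at hdeg
    rw [eq_C_of_degree_eq_zero hdeg.1, eq_C_of_degree_eq_zero hdeg.2] at hpq ⊢
    rw [oreMul_C, ← C_mul] at hpq
    simp only [eval₂_C]
    exact (hr.isUnit_or_isUnit (C_injective hpq).symm).imp (.map φ) (.map φ)

theorem irreducible_linear (h : IsOreExtension δ φ y) {u v : R} (hu : u ≠ 0)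
    (huv : IsRelPrime u v) (huv' : IsRelPrime u (v - δ u)) : Irreducible (φ u * y + φ v) := by
  have hlin : eval₂ φ y (C u * X + C v) = φ u * y + φ v := by simp [eval₂_mul_X]
  rw [← hlin]
  refine ⟨fun hunit => ?_, fun a b hab => ?_⟩
  · obtain ⟨r, -, hr⟩ := h.exists_isUnit_of_isUnit_eval₂ hunit
    have hdeg := congrArg natDegree hr
    rw [natDegree_linear hu, natDegree_C] at hdeg
    exact one_ne_zero hdeg
  · obtain ⟨p, q, rfl, rfl, hpq, hdeg⟩ := h.exists_oreMul_eq_of_eval₂_eq_mul hab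
    rw [degree_linear hu, Nat.WithBot.add_eq_one_iff] at hdeg
    rcases hdeg with ⟨hp, hq⟩ | ⟨hp, hq⟩
    · left
      rw [eq_C_of_degree_eq_zero hp] at hpq ⊢
      obtain ⟨hdu, hdv⟩ := dvd_of_oreMul_C_eq_linear δ hpq
      simpa only [eval₂_C] using (huv hdu hdv).map φ
    · right
      rw [eq_C_of_degree_eq_zero hq] at hpq ⊢
      obtain ⟨hdu, hdv⟩ := dvd_of_oreMul_apply_C_eq_linear δ (natDegree_le_of_degree_le hp.le) hpq
      simpa only [eval₂_C] using (huv' hdu hdv).map φ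

theorem irreducible_var (h : IsOreExtension δ φ y) : Irreducible y := by
  simpa only [map_one, map_zero, one_mul, add_zero] using
    h.irreducible_linear one_ne_zero (isRelPrime_one_left (x := 0)) isRelPrime_one_left

theorem irreducible_one_add_var_mul (h : IsOreExtension δ φ y) {x : R} (hx : x ≠ 0)
    (hδx : δ x = 1) (hx2 : IsRelPrime x 2) : Irreducible (1 + y * φ x) := by
  have hlin : 1 + y * φ x = φ x * y + φ 2 := by
    rw [h.var_mul_map_of_apply_eq_one hδx, map_ofNat, ← one_add_one_eq_two]
    abel
  have hsub : (2 : R) - δ x = 1 := by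
    rw [hδx]
    norm_num
  rw [hlin]
  exact h.irreducible_linear hx hx2 (hsub ▸ isRelPrime_one_right)

end IsOreExtension

section WeylAlgebra

theorem wY_mul_wX : wY * wX = wX * wY + 1 := by
  simpa [wX, wY] using RingQuot.mkAlgHom_rel ℂ weylRel.rel

theorem wY_mul_aeval_wX (f : ℂ[X]) :
    wY * aeval wX f = aeval wX f * wY + aeval wX (derivative f) := by
  induction f using Polynomial.induction_on with
  | C c => simp [Algebra.commutes]
  | add f g hf hg => simp only [map_add, mul_add, add_mul, hf, hg]; abel
  | monomial n c ih =>
    have hsucc : C c * X ^ (n + 1) = C c * X ^ n * X := by rw [pow_succ, mul_assoc]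
    rw [hsucc]
    generalize C c * X ^ n = f at ih ⊢
    rw [derivative_mul, derivative_X, mul_one, map_add, map_mul, map_mul, aeval_X, ← mul_assoc, ih,
      add_mul, mul_assoc _ wY, wY_mul_wX]
    noncomm_ring

/-- The left multiplication action of the Weyl algebra on normally ordered polynomials, defined on
generators; applied to `1`, it recovers the normal form of an element and so its uniqueness. -/
noncomputable def weylAct : WeylA →ₐ[ℂ] Module.End ℂ ℂ[X][X] :=
  RingQuot.liftAlgHom ℂ ⟨FreeAlgebra.lift ℂ ![Algebra.lmul ℂ _ (C X), oreVar derivative'], by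
    rintro _ _ ⟨⟩
    refine LinearMap.ext fun p => ?_
    simp [oreVar_C_mul]⟩

theorem weylAct_wX : weylAct wX = Algebra.lmul ℂ _ (C X) := by
  simp [weylAct, wX]

theorem weylAct_wY : weylAct wY = oreVar derivative' := by
  simp [weylAct, wY]

theorem surjective_eval₂_aeval_wX :
    Function.Surjective (eval₂ (aeval wX : ℂ[X] →ₐ[ℂ] WeylA).toRingHom wY) := by
  intro a
  obtain ⟨a, rfl⟩ := RingQuot.mkAlgHom_surjective ℂ weylRel a
  induction a using FreeAlgebra.induction with
  | grade0 c => exact ⟨C (C c), by simp⟩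
  | grade1 i =>
    fin_cases i
    · exact ⟨C X, by simp [wX]⟩
    · exact ⟨X, by simp [wY]⟩
  | mul a b ha hb =>
    obtain ⟨⟨p, hp⟩, q, hq⟩ := And.intro ha hb
    exact ⟨oreMul derivative' p q, by rw [eval₂_oreMul wY_mul_aeval_wX, hp, hq, map_mul]⟩
  | add a b ha hb =>
    obtain ⟨⟨p, hp⟩, q, hq⟩ := And.intro ha hb
    exact ⟨p + q, by rw [eval₂_add, hp, hq, map_add]⟩

theorem injective_eval₂_aeval_wX :
    Function.Injective (eval₂ (aeval wX : ℂ[X] →ₐ[ℂ] WeylA).toRingHom wY) := by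
  have hX : weylAct.comp (aeval wX) = (Algebra.lmul ℂ ℂ[X][X]).comp CAlgHom := by
    refine algHom_ext ?_
    rw [AlgHom.comp_apply, aeval_X, weylAct_wX, AlgHom.comp_apply, CAlgHom_apply]
  exact injective_eval₂_of_ringHom weylAct.toRingHom (congrArg AlgHom.toRingHom hX) weylAct_wY

theorem isOreExtension_weylA :
    IsOreExtension derivative' (aeval wX : ℂ[X] →ₐ[ℂ] WeylA).toRingHom wY :=
  ⟨wY_mul_aeval_wX, injective_eval₂_aeval_wX, surjective_eval₂_aeval_wX⟩

end WeylAlgebra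

theorem stmt_18_general {k R A : Type*} [CommRing k] [CommRing R] [IsDomain R] [Algebra k R]
    [Ring A] {δ : Derivation k R R} {φ : R →+* A} {y : A} (h : IsOreExtension δ φ y) {x : R}
    (hx : Irreducible x) (hδx : δ x = 1) (hx2 : IsRelPrime x 2) :
    y ^ 2 * φ x = (1 + y * φ x) * y ∧
    Irreducible (φ x) ∧ Irreducible y ∧ Irreducible (1 + y * φ x) ∧
    ¬ (∀ l₁ l₂ : List A, (∀ z ∈ l₁, Irreducible z) → (∀ z ∈ l₂, Irreducible z) →
        l₁.prod = l₂.prod → l₁.length = l₂.length) := by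
  have hyx := h.var_mul_map_of_apply_eq_one hδx
  have hfac : y ^ 2 * φ x = (1 + y * φ x) * y := by
    rw [pow_two, mul_assoc, hyx, mul_add, ← mul_assoc, hyx]
    noncomm_ring
  have hirr := h.irreducible_one_add_var_mul hx.ne_zero hδx hx2
  refine ⟨hfac, h.irreducible_map hx, h.irreducible_var, hirr, fun hlen => ?_⟩
  have three_eq_two := hlen [y, y, φ x] [1 + y * φ x, y]
    (by simp [h.irreducible_map hx, h.irreducible_var])
    (by simp [hirr, h.irreducible_var]) (by simpa [pow_two, mul_assoc] using hfac)
  simp at three_eq_two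

/-- In the first Weyl algebra `A₁`, the element `f = y²x` satisfies
`f = (1 + yx)·y`, and `x`, `y`, `1 + yx` are atoms; so `f` has factorizations into
atoms of lengths `2` and `3`, and in particular `A₁` is not half-factorial. -/
theorem stmt_18 :
    wY ^ 2 * wX = (1 + wY * wX) * wY ∧
    Irreducible wX ∧ Irreducible wY ∧ Irreducible (1 + wY * wX) ∧
    ¬ (∀ l₁ l₂ : List WeylA, (∀ z ∈ l₁, Irreducible z) → (∀ z ∈ l₂, Irreducible z) →
        l₁.prod = l₂.prod → l₁.length = l₂.length) := by
  simpa using stmt_18_general isOreExtension_weylA irreducible_X derivative_X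
    (isUnit_C.mpr (by norm_num : IsUnit (2 : ℂ))).isRelPrime_right
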